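/- Upper bound of the smoothed max-relative entropy by the Petz–Rényi divergence: For all states ρ, σ on ℂ^d, all ε ∈ (0,1) and all α ∈ (1,∞), D_max^ε(ρ‖σ) ≤ D_α(ρ‖σ) + (2/(α−1)) log(1/ε) + log(1/(1−ε²)) in the extended reals. -/

import Mathlib

open scoped Kronecker ComplexOrder

noncomputable section

namespace QCD

attribute [local instance] Classical.propDecidable

variable {n m : Type} [Fintype n] [DecidableEq n] [Fintype m] [DecidableEq m]

/-- The real part of the trace of a complex matrix. -/
def rtr (A : Matrix n n ℂ) : ℝ := (A.trace).re

/-- A quantum state: positive semidefinite with trace one. -/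
def IsState (ρ : Matrix n n ℂ) : Prop := ρ.PosSemidef ∧ ρ.trace = 1

/-- Loewner order: `A ≤ B` iff `B - A` is positive semidefinite. -/
def loewnerLE (A B : Matrix n n ℂ) : Prop := (B - A).PosSemidef

/-- Support containment (for PSD matrices): `ker σ ⊆ ker ρ`. -/
def SuppLE (ρ σ : Matrix n n ℂ) : Prop := ∀ v : n → ℂ, σ.mulVec v = 0 → ρ.mulVec v = 0

/-- Functional calculus for Hermitian matrices (junk value `0` otherwise). -/
def matFun (f : ℝ → ℝ) (A : Matrix n n ℂ) : Matrix n n ℂ :=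
  if hA : A.IsHermitian then
    (hA.eigenvectorUnitary : Matrix n n ℂ) *
      Matrix.diagonal (fun i => (f (hA.eigenvalues i) : ℂ)) *
      (star (hA.eigenvectorUnitary : Matrix n n ℂ))
  else 0

/-- Matrix square root via functional calculus. -/
def msqrt (A : Matrix n n ℂ) : Matrix n n ℂ := matFun Real.sqrt A

/-- Matrix real power taken on the support (`0 ^ t := 0`). -/
def mpow (A : Matrix n n ℂ) (t : ℝ) : Matrix n n ℂ :=
  matFun (fun x => if x = 0 then 0 else x ^ t) A

/-- Matrix base-2 logarithm on the support. -/
def mlog (A : Matrix n n ℂ) : Matrix n n ℂ := matFun (Real.logb 2) A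

/-- Positive part of a Hermitian matrix. -/
def mposPart (A : Matrix n n ℂ) : Matrix n n ℂ := matFun (fun x => max x 0) A

/-- Trace norm. -/
def traceNorm (A : Matrix n m ℂ) : ℝ := rtr (msqrt (A.conjTranspose * A))

/-- Base-2 logarithm as an extended real (`⊥` on nonpositive input). -/
def elog (x : ℝ) : EReal := if x ≤ 0 then ⊥ else ((Real.logb 2 x : ℝ) : EReal)

/-- Base-2 logarithm of an extended real. -/
def elogE (x : EReal) : EReal := if x = ⊤ then ⊤ else elog x.toReal

/-- `2 ^ x` for an extended real `x`. -/
def epow2 (x : EReal) : EReal :=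
  if x = ⊤ then ⊤ else if x = ⊥ then 0 else ((((2:ℝ) ^ x.toReal : ℝ)) : EReal)

/-- Umegaki relative entropy (base 2), `⊤` if the support condition fails. -/
def relEntropy (ρ σ : Matrix n n ℂ) : EReal :=
  if SuppLE ρ σ then ((rtr (ρ * (mlog ρ - mlog σ)) : ℝ) : EReal) else ⊤

/-- Petz–Rényi divergence (base 2). -/
def petzRenyi (α : ℝ) (ρ σ : Matrix n n ℂ) : EReal :=
  if 1 < α ∧ ¬ SuppLE ρ σ then ⊤
  else (((α - 1)⁻¹ : ℝ) : EReal) * elog (rtr (mpow ρ α * mpow σ (1 - α)))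

/-- Geometric (maximal) Rényi divergence (base 2). -/
def geomRenyi (α : ℝ) (ρ σ : Matrix n n ℂ) : EReal :=
  if SuppLE ρ σ then
    (((α - 1)⁻¹ : ℝ) : EReal) *
      elog (rtr (σ * mpow (mpow σ (-(1/2 : ℝ)) * ρ * mpow σ (-(1/2 : ℝ))) α))
  else ⊤

/-- Max-relative entropy (base 2). -/
def dMax (ρ σ : Matrix n n ℂ) : EReal :=
  sInf {x : EReal | ∃ lam : ℝ, x = (lam : EReal) ∧ loewnerLE ρ ((((2:ℝ) ^ lam : ℝ) : ℂ) • σ)}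

/-- Uhlmann fidelity. -/
def fidelity (ρ σ : Matrix n n ℂ) : ℝ := (rtr (msqrt (msqrt σ * ρ * msqrt σ))) ^ 2

/-- Sine (purified) distance. -/
def sineDist (ρ σ : Matrix n n ℂ) : ℝ := Real.sqrt (1 - fidelity ρ σ)

/-- Smoothed max-relative entropy: smoothing over states in the sine-distance ball. -/
def dMaxSmooth (δ : ℝ) (ρ σ : Matrix n n ℂ) : EReal :=
  ⨅ (ρ' : Matrix n n ℂ) (_ : IsState ρ' ∧ sineDist ρ ρ' ≤ δ), dMax ρ' σ

/-- Hypothesis testing divergence (base 2). -/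
def dH (ε : ℝ) (ρ σ : Matrix n n ℂ) : EReal :=
  - elog (sInf {x : ℝ | ∃ T : Matrix n n ℂ,
      T.PosSemidef ∧ ((1 : Matrix n n ℂ) - T).PosSemidef ∧ 1 - ε ≤ rtr (T * ρ) ∧ x = rtr (T * σ)})

/-- The quantity `c_γ(ρ‖σ)`. -/
def cGamma (γ : ℝ) (ρ σ : Matrix n n ℂ) : EReal :=
  ((γ⁻¹ : ℝ) : EReal) *
    elogE (epow2 ((γ : ℝ) * petzRenyi (1 + γ) ρ σ) +
           epow2 (((-γ : ℝ) : EReal) * petzRenyi (1 - γ) ρ σ) + 1)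

/-- Binary entropy (base 2). -/
def binEnt (x : ℝ) : ℝ := -(x * Real.logb 2 x) - (1 - x) * Real.logb 2 (1 - x)

/-- Action of `id_k ⊗ Φ` on block matrices. -/
def blockApply {k : Type} (Φ : Matrix n n ℂ →ₗ[ℂ] Matrix m m ℂ)
    (M : Matrix (k × n) (k × n) ℂ) : Matrix (k × m) (k × m) ℂ :=
  Matrix.of fun p q => Φ (Matrix.of fun a b => M (p.1, a) (q.1, b)) p.2 q.2

/-- Action of `Φ ⊗ id_k` on block matrices. -/
def blockApplyRight {k : Type} (Φ : Matrix n n ℂ →ₗ[ℂ] Matrix m m ℂ)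
    (M : Matrix (n × k) (n × k) ℂ) : Matrix (m × k) (m × k) ℂ :=
  Matrix.of fun p q => Φ (Matrix.of fun a b => M (a, p.2) (b, q.2)) p.1 q.1

/-- Quantum channel: trace preserving and completely positive. -/
def IsQChannel (Φ : Matrix n n ℂ →ₗ[ℂ] Matrix m m ℂ) : Prop :=
  (∀ M : Matrix n n ℂ, (Φ M).trace = M.trace) ∧
  (∀ k : ℕ, 1 ≤ k → ∀ M : Matrix (Fin k × n) (Fin k × n) ℂ, M.PosSemidef →
    (blockApply Φ M).PosSemidef)

/-- `id_k ⊗ Φ` as a linear map. -/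
def blockApplyL (k : Type) (Φ : Matrix n n ℂ →ₗ[ℂ] Matrix m m ℂ) :
    Matrix (k × n) (k × n) ℂ →ₗ[ℂ] Matrix (k × m) (k × m) ℂ where
  toFun := blockApply Φ
  map_add' M N := by
    ext p q
    show Φ (Matrix.of fun a b => (M + N) (p.1, a) (q.1, b)) p.2 q.2 = _
    have h : (Matrix.of fun a b => (M + N) (p.1, a) (q.1, b)) =
        (Matrix.of fun a b => M (p.1, a) (q.1, b)) +
          (Matrix.of fun a b => N (p.1, a) (q.1, b)) := rfl
    rw [h, map_add]
    rfl
  map_smul' c M := by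
    ext p q
    show Φ (Matrix.of fun a b => (c • M) (p.1, a) (q.1, b)) p.2 q.2 = _
    have h : (Matrix.of fun a b => (c • M) (p.1, a) (q.1, b)) =
        c • (Matrix.of fun a b => M (p.1, a) (q.1, b)) := rfl
    rw [h, map_smul]
    rfl

/-- `Φ ⊗ id_k` as a linear map. -/
def blockApplyRightL (k : Type) (Φ : Matrix n n ℂ →ₗ[ℂ] Matrix m m ℂ) :
    Matrix (n × k) (n × k) ℂ →ₗ[ℂ] Matrix (m × k) (m × k) ℂ where
  toFun := blockApplyRight Φ
  map_add' M N := by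
    ext p q
    show Φ (Matrix.of fun a b => (M + N) (a, p.2) (b, q.2)) p.1 q.1 = _
    have h : (Matrix.of fun a b => (M + N) (a, p.2) (b, q.2)) =
        (Matrix.of fun a b => M (a, p.2) (b, q.2)) +
          (Matrix.of fun a b => N (a, p.2) (b, q.2)) := rfl
    rw [h, map_add]
    rfl
  map_smul' c M := by
    ext p q
    show Φ (Matrix.of fun a b => (c • M) (a, p.2) (b, q.2)) p.1 q.1 = _
    have h : (Matrix.of fun a b => (c • M) (a, p.2) (b, q.2)) =
        c • (Matrix.of fun a b => M (a, p.2) (b, q.2)) := rfl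
    rw [h, map_smul]
    rfl

/-- Tensor product of two channels (Kronecker product action). -/
def tensorChannel {n₁ m₁ n₂ m₂ : Type}
    (E₁ : Matrix n₁ n₁ ℂ →ₗ[ℂ] Matrix m₁ m₁ ℂ) (E₂ : Matrix n₂ n₂ ℂ →ₗ[ℂ] Matrix m₂ m₂ ℂ) :
    Matrix (n₁ × n₂) (n₁ × n₂) ℂ →ₗ[ℂ] Matrix (m₁ × m₂) (m₁ × m₂) ℂ :=
  (blockApplyRightL m₂ E₁).comp (blockApplyL n₁ E₂)

/-- Index type for `k`-fold tensor powers. -/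
def tpow (ι : Type) : ℕ → Type
  | 0 => PUnit
  | (k+1) => tpow ι k × ι

def tpowFintype (ι : Type) [Fintype ι] : ∀ k : ℕ, Fintype (tpow ι k)
  | 0 => inferInstanceAs (Fintype PUnit)
  | (k+1) => letI := tpowFintype ι k; inferInstanceAs (Fintype (tpow ι k × ι))

instance (ι : Type) [Fintype ι] (k : ℕ) : Fintype (tpow ι k) := tpowFintype ι k

def tpowDecEq (ι : Type) [DecidableEq ι] : ∀ k : ℕ, DecidableEq (tpow ι k)
  | 0 => inferInstanceAs (DecidableEq PUnit)
  | (k+1) => letI := tpowDecEq ι k; inferInstanceAs (DecidableEq (tpow ι k × ι))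

instance (ι : Type) [DecidableEq ι] (k : ℕ) : DecidableEq (tpow ι k) := tpowDecEq ι k

/-- `k`-fold Kronecker tensor power of a matrix. -/
def tpowMat (ρ : Matrix n n ℂ) : ∀ k : ℕ, Matrix (tpow n k) (tpow n k) ℂ
  | 0 => 1
  | (k+1) => (tpowMat ρ k) ⊗ₖ ρ

/-- `k`-fold tensor power of a channel. -/
def tpowChannel (Φ : Matrix n n ℂ →ₗ[ℂ] Matrix m m ℂ) :
    ∀ k : ℕ, Matrix (tpow n k) (tpow n k) ℂ →ₗ[ℂ] Matrix (tpow m k) (tpow m k) ℂ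
  | 0 => LinearMap.id
  | (k+1) => tensorChannel (tpowChannel Φ k) Φ

/-- Channel divergence induced by a divergence `𝔇` on states:
sup over `k ≥ 1` and input states `ν` on `ℂ^k ⊗ ℂ^d`. -/
def chDiv (𝔇 : ∀ (p : Type) [Fintype p] [DecidableEq p], Matrix p p ℂ → Matrix p p ℂ → EReal)
    (E F : Matrix n n ℂ →ₗ[ℂ] Matrix m m ℂ) : EReal :=
  ⨆ (k : ℕ) (_ : 1 ≤ k) (ν : Matrix (Fin k × n) (Fin k × n) ℂ) (_ : IsState ν),
    𝔇 (Fin k × m) (blockApply E ν) (blockApply F ν)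

/-- The geometric Rényi divergence as a divergence family. -/
def geomD (α : ℝ) : ∀ (p : Type) [Fintype p] [DecidableEq p],
    Matrix p p ℂ → Matrix p p ℂ → EReal :=
  fun _ _ _ => geomRenyi α

/-- The Umegaki relative entropy as a divergence family. -/
def relD : ∀ (p : Type) [Fintype p] [DecidableEq p],
    Matrix p p ℂ → Matrix p p ℂ → EReal :=
  fun _ _ _ => relEntropy

/-- The hypothesis testing divergence as a divergence family. -/
def dHD (ε : ℝ) : ∀ (p : Type) [Fintype p] [DecidableEq p],
    Matrix p p ℂ → Matrix p p ℂ → EReal :=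
  fun _ _ _ => dH ε

/-- Regularized channel relative entropy. -/
def regRelEntropy (E F : Matrix n n ℂ →ₗ[ℂ] Matrix m m ℂ) : EReal :=
  ⨆ (k : ℕ) (_ : 1 ≤ k),
    (((k : ℝ)⁻¹ : ℝ) : EReal) * chDiv relD (tpowChannel E k) (tpowChannel F k)

end QCD

/-
The Petz trace Q = Tr[ρ^α σ^(1-α)] controls Neyman–Pearson tests: by the three-lines theorem
along a path from ρ^α σ^(1-α) to σ through ρ, every contraction C satisfies
Tr[CρC†] ≤ Q^(1/α) Tr[CσC†]^((α-1)/α), so that r Tr[CσC†] ≤ Tr[CρC†] forces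
Tr[CρC†] ≤ Q r^(1-α). Taking r^(α-1) = Q/ε², this bound is ε².

For each M ≥ 0, let T be the spectral projection of M onto the eigenvectors v with
⟨v, ρv⟩ ≤ r ⟨v, σv⟩. Then Tr[M TρT] ≤ r Tr[Mσ], and Tr[Tρ] ≥ 1 - ε² by the bound above, so TρT
normalizes to a state ε-close to ρ that meets the constraint tested by M. The minimax theorem
replaces these states depending on M by a single one. Since minimax needs a compact convex set, the
ball around ρ is replaced by the positive semidefinite 2 × 2 block matrices with first corner ρ
whose off-diagonal corner has large trace; this trace bounds the root fidelity from below.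
-/

namespace QCD

open Matrix Complex.HadamardThreeLines

section Trace

variable {n m : Type} [Fintype n] [Fintype m]

lemma rtr_add (A B : Matrix n n ℂ) : rtr (A + B) = rtr A + rtr B := by simp [rtr]

lemma rtr_sub (A B : Matrix n n ℂ) : rtr (A - B) = rtr A - rtr B := by simp [rtr]

lemma rtr_smul (c : ℝ) (A : Matrix n n ℂ) : rtr (c • A) = c * rtr A := by simp [rtr]

lemma rtr_conjTranspose (A : Matrix n n ℂ) : rtr Aᴴ = rtr A := by simp [rtr]

lemma rtr_mul_comm (A : Matrix m n ℂ) (B : Matrix n m ℂ) : rtr (A * B) = rtr (B * A) := by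
  rw [rtr, trace_mul_comm, rtr]

lemma rtr_nonneg {A : Matrix n n ℂ} (hA : A.PosSemidef) : 0 ≤ rtr A :=
  (Complex.le_def.1 hA.trace_nonneg).1

lemma isLinearMap_rtr : IsLinearMap ℝ (rtr : Matrix n n ℂ → ℝ) := ⟨rtr_add, rtr_smul⟩

lemma continuous_rtr : Continuous (rtr : Matrix n n ℂ → ℝ) :=
  Complex.continuous_re.comp continuous_id.matrix_trace

lemma two_mul_norm_trace_mul_le (A : Matrix m n ℂ) (B : Matrix n m ℂ) :
    2 * ‖(A * B).trace‖ ≤ rtr (A * Aᴴ) + rtr (Bᴴ * B) := by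
  obtain ⟨u, hu, huAB⟩ := RCLike.exists_norm_eq_mul_self (A * B).trace
  have hu_mul : star u * u = 1 := by
    rw [Complex.star_def, ← Complex.normSq_eq_conj_mul_self, Complex.normSq_eq_norm_sq, hu]
    norm_num
  have hsq := rtr_nonneg (posSemidef_self_mul_conjTranspose (u • A - Bᴴ))
  have expand : (u • A - Bᴴ) * (u • A - Bᴴ)ᴴ =
      A * Aᴴ + Bᴴ * B - (u • (A * B) + (u • (A * B))ᴴ) := by
    simp only [conjTranspose_sub, conjTranspose_smul, conjTranspose_conjTranspose,
      Matrix.sub_mul, Matrix.mul_sub, Matrix.smul_mul, Matrix.mul_smul, smul_sub, smul_smul, hu_mul,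
      one_smul, conjTranspose_mul]
    abel
  have hre : rtr (u • (A * B)) = ‖(A * B).trace‖ := by
    rw [rtr, trace_smul, smul_eq_mul, ← huAB]; exact Complex.ofReal_re _
  rw [expand, rtr_sub, rtr_add, rtr_add, rtr_conjTranspose, hre] at hsq
  linarith

lemma posSemidef_of_rtr_mul_nonneg {A : Matrix n n ℂ} (hA : A.IsHermitian)
    (h : ∀ M : Matrix n n ℂ, M.PosSemidef → rtr M ≤ 1 → 0 ≤ rtr (M * A)) : A.PosSemidef := by
  refine .of_dotProduct_mulVec_nonneg hA fun v => ?_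
  set V : Matrix n n ℂ := vecMulVec v (star v)
  have hV : V.PosSemidef := posSemidef_vecMulVec_self_star v
  have hpos : 0 < 1 + rtr V := by linarith [rtr_nonneg hV]
  have hscaled := h ((1 + rtr V)⁻¹ • V) (hV.smul (by positivity)) (by
    rw [rtr_smul, inv_mul_le_one₀ hpos]; linarith)
  rw [Matrix.smul_mul, rtr_smul, mul_nonneg_iff_of_pos_left (by positivity)] at hscaled
  have hform : (V * A).trace = star v ⬝ᵥ A *ᵥ v := by
    rw [vecMulVec_mul, trace_vecMulVec, dotProduct_mulVec, dotProduct_comm]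
  rw [rtr, hform] at hscaled
  exact Complex.le_def.2 ⟨hscaled, (hA.im_star_dotProduct_mulVec_self v).symm⟩

open scoped MatrixOrder Matrix.Norms.L2Operator in
lemma exists_eq_conjTranspose_mul_self {A : Matrix n n ℂ} (hA : A.PosSemidef) :
    ∃ C : Matrix n n ℂ, A = Cᴴ * C := by
  classical exact CStarAlgebra.nonneg_iff_eq_star_mul_self.mp hA.nonneg

lemma rtr_mul_nonneg {A B : Matrix n n ℂ} (hA : A.PosSemidef) (hB : B.PosSemidef) :
    0 ≤ rtr (A * B) := by
  obtain ⟨C, rfl⟩ := exists_eq_conjTranspose_mul_self hA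
  rw [Matrix.mul_assoc, rtr_mul_comm]
  exact rtr_nonneg (hB.mul_mul_conjTranspose_same C)

end Trace

section Contraction

variable {n m k : Type} [Fintype n] [Fintype m] [Fintype k] [DecidableEq n]

/-- Contractions, in the Loewner form `Kᴴ K ≤ 1`, which is how they meet traces of positive
semidefinite matrices. -/
def IsContraction (K : Matrix m n ℂ) : Prop := (1 - Kᴴ * K).PosSemidef

lemma IsContraction.conjTranspose [DecidableEq m] {K : Matrix m n ℂ} (hK : IsContraction K) :
    IsContraction Kᴴ := by
  have hP : ((1 - K * Kᴴ) * (1 - K * Kᴴ)ᴴ + K * (1 - Kᴴ * K) * Kᴴ).PosSemidef :=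
    (posSemidef_self_mul_conjTranspose _).add (hK.mul_mul_conjTranspose_same K)
  have split : 1 - K * Kᴴ = (1 - K * Kᴴ) * (1 - K * Kᴴ)ᴴ + K * (1 - Kᴴ * K) * Kᴴ := by
    simp only [conjTranspose_sub, conjTranspose_one, conjTranspose_mul,
      conjTranspose_conjTranspose, Matrix.mul_sub, Matrix.sub_mul, Matrix.mul_one, Matrix.one_mul,
      Matrix.mul_assoc]
    abel
  rwa [IsContraction, conjTranspose_conjTranspose, split]

open scoped MatrixOrder in
lemma posSemidef_one_sub_of_isStarProjection {P : Matrix n n ℂ} (hP : IsStarProjection P) :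
    (1 - P).PosSemidef :=
  hP.one_sub_nonneg.posSemidef

lemma isContraction_of_isStarProjection {P : Matrix n n ℂ} (hP : IsStarProjection P) :
    IsContraction P := by
  rw [IsContraction, ← star_eq_conjTranspose, hP.isSelfAdjoint.star_eq, hP.isIdempotentElem.eq]
  exact posSemidef_one_sub_of_isStarProjection hP

omit [Fintype n] in
lemma IsContraction.mul [Finite n] [DecidableEq m] {K : Matrix k m ℂ} {L : Matrix m n ℂ}
    (hK : IsContraction K) (hL : IsContraction L) : IsContraction (K * L) := by
  have split : 1 - (K * L)ᴴ * (K * L) = (1 - Lᴴ * L) + Lᴴ * (1 - Kᴴ * K) * L := by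
    simp only [conjTranspose_mul, Matrix.mul_sub, Matrix.sub_mul, Matrix.mul_one, Matrix.mul_assoc]
    abel
  rw [IsContraction, split]
  exact hL.add (hK.conjTranspose_mul_mul_same L)

lemma IsContraction.rtr_conjTranspose_mul_self_le {K : Matrix m n ℂ} (hK : IsContraction K)
    (A : Matrix n k ℂ) : rtr ((K * A)ᴴ * (K * A)) ≤ rtr (Aᴴ * A) := by
  have h := rtr_nonneg (hK.conjTranspose_mul_mul_same A)
  have split : Aᴴ * (1 - Kᴴ * K) * A = Aᴴ * A - (K * A)ᴴ * (K * A) := by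
    simp only [conjTranspose_mul, Matrix.mul_sub, Matrix.sub_mul, Matrix.mul_one, Matrix.mul_assoc]
  rw [split, rtr_sub] at h
  linarith

lemma IsContraction.two_mul_norm_trace_mul_mul_le {K : Matrix m n ℂ} (hK : IsContraction K)
    (A : Matrix n k ℂ) (B : Matrix k n ℂ) :
    2 * ‖(K * (A * B) * Kᴴ).trace‖ ≤ rtr (A * Aᴴ) + rtr (Bᴴ * B) := by
  have amgm := two_mul_norm_trace_mul_le (K * A) (B * Kᴴ)
  have hA := hK.rtr_conjTranspose_mul_self_le A
  have hB := hK.rtr_conjTranspose_mul_self_le Bᴴ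
  rw [rtr_mul_comm (K * A)ᴴ, rtr_mul_comm Aᴴ] at hA
  rw [rtr_mul_comm (K * Bᴴ)ᴴ, conjTranspose_conjTranspose, rtr_mul_comm B Bᴴ] at hB
  simp only [conjTranspose_mul, conjTranspose_conjTranspose, Matrix.mul_assoc] at amgm hA hB ⊢
  linarith

lemma IsContraction.norm_trace_mul_le {K A : Matrix n n ℂ} (hK : IsContraction K)
    (hA : A.PosSemidef) : ‖(K * A).trace‖ ≤ rtr A := by
  obtain ⟨C, rfl⟩ := exists_eq_conjTranspose_mul_self hA
  have amgm := two_mul_norm_trace_mul_le C (K * Cᴴ)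
  have hKC := hK.rtr_conjTranspose_mul_self_le Cᴴ
  rw [conjTranspose_conjTranspose] at hKC
  rw [← Matrix.mul_assoc, trace_mul_comm, rtr_mul_comm Cᴴ]
  linarith

end Contraction

section Compactness

variable {n : Type} [Fintype n]

lemma norm_apply_le_rtr {A : Matrix n n ℂ} (hA : A.PosSemidef) (i j : n) :
    ‖A i j‖ ≤ rtr A := by
  classical
  have hK : IsContraction (single j i (1 : ℂ)) := by
    have hproj : 1 - (single j i (1 : ℂ))ᴴ * single j i 1 = diagonal (1 - Pi.single i 1) := by
      rw [conjTranspose_single, star_one, single_mul_single_same, mul_one, ← diagonal_single,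
        ← diagonal_one, diagonal_sub]
      rfl
    rw [IsContraction, hproj]
    exact PosSemidef.diagonal fun k => by by_cases hk : k = i <;> simp [hk]
  simpa [trace_single_mul] using hK.norm_trace_mul_le hA

omit [Fintype n] in
open scoped MatrixOrder Matrix.Norms.L2Operator in
lemma isClosed_setOf_posSemidef [Finite n] : IsClosed {A : Matrix n n ℂ | A.PosSemidef} := by
  classical
  have := Fintype.ofFinite n
  simp only [← nonneg_iff_posSemidef]
  exact CStarAlgebra.isClosed_nonneg

omit [Fintype n] in
lemma convex_setOf_posSemidef : Convex ℝ {A : Matrix n n ℂ | A.PosSemidef} :=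
  fun _ hA _ hB _ _ ha hb _ => (hA.smul ha).add (hB.smul hb)

lemma isCompact_setOf_posSemidef_rtr_le (c : ℝ) :
    IsCompact {A : Matrix n n ℂ | A.PosSemidef ∧ rtr A ≤ c} := by
  have hball : IsCompact (Set.univ.pi fun _ : n => Set.univ.pi fun _ : n =>
      Metric.closedBall (0 : ℂ) c) :=
    isCompact_univ_pi fun _ => isCompact_univ_pi fun _ => isCompact_closedBall _ _
  refine IsCompact.of_isClosed_subset (X := Matrix n n ℂ) hball
    (isClosed_setOf_posSemidef.inter (isClosed_le continuous_rtr continuous_const)) ?_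
  rintro A ⟨hA, hAc⟩ i - j -
  simpa using (norm_apply_le_rtr hA i j).trans hAc

lemma convex_setOf_posSemidef_rtr_le (c : ℝ) :
    Convex ℝ {A : Matrix n n ℂ | A.PosSemidef ∧ rtr A ≤ c} :=
  convex_setOf_posSemidef.inter (convex_halfSpace_le isLinearMap_rtr c)

lemma exists_posSemidef_of_forall_exists_rtr_mul_nonneg {S : Set (Matrix n n ℂ)}
    (hS : IsCompact S) (hconv : Convex ℝ S) (hherm : ∀ D ∈ S, D.IsHermitian)
    (h : ∀ M : Matrix n n ℂ, M.PosSemidef → ∃ D ∈ S, 0 ≤ rtr (M * D)) :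
    ∃ D ∈ S, D.PosSemidef := by
  set T : Set (Matrix n n ℂ) := {M | M.PosSemidef ∧ rtr M ≤ 1}
  have hTconv : Convex ℝ T := convex_setOf_posSemidef_rtr_le 1
  have hTne : T.Nonempty := ⟨0, .zero, by simp [rtr]⟩
  have hSne : S.Nonempty := (h 0 .zero).imp fun _ => And.left
  have hcont : Continuous fun p : Matrix n n ℂ × Matrix n n ℂ => rtr (p.1 * p.2) :=
    continuous_rtr.comp (continuous_fst.mul continuous_snd)
  let rtrLin : Matrix n n ℂ →ₗ[ℝ] ℝ := isLinearMap_rtr.mk'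
  obtain ⟨M, hM, D, hD, hsaddle⟩ := Sion.exists_isSaddlePointOn
    (f := fun M D : Matrix n n ℂ => rtr (M * D)) hTne hTconv
    (isCompact_setOf_posSemidef_rtr_le 1)
    (fun D _ => (hcont.comp (.prodMk_left D)).lowerSemicontinuous.lowerSemicontinuousOn _)
    (fun D _ => ((rtrLin ∘ₗ LinearMap.mulRight ℝ D).convexOn hTconv).quasiconvexOn)
    hconv hSne hS
    (fun M _ => (hcont.comp (.prodMk_right M)).upperSemicontinuous.upperSemicontinuousOn _)
    (fun M _ => ((rtrLin ∘ₗ LinearMap.mulLeft ℝ M).concaveOn hconv).quasiconcaveOn)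
  obtain ⟨D', hD', hMD'⟩ := h M hM.1
  exact ⟨D, hD, posSemidef_of_rtr_mul_nonneg (hherm D hD) fun N hN hN1 =>
    hMD'.trans (hsaddle N ⟨hN, hN1⟩ D' hD')⟩

open scoped Pointwise in
lemma exists_loewnerLE_of_forall_exists_rtr_mul_le {S : Set (Matrix n n ℂ)}
    (hS : IsCompact S) (hconv : Convex ℝ S) (hherm : ∀ A ∈ S, A.IsHermitian) {B : Matrix n n ℂ}
    (hB : B.IsHermitian)
    (h : ∀ M : Matrix n n ℂ, M.PosSemidef → ∃ A ∈ S, rtr (M * A) ≤ rtr (M * B)) :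
    ∃ A ∈ S, loewnerLE A B := by
  obtain ⟨_, ⟨_, rfl, A, hA, rfl⟩, hpos⟩ := exists_posSemidef_of_forall_exists_rtr_mul_nonneg
    (by rw [Set.singleton_sub]; exact hS.image (continuous_sub_left B))
    ((convex_singleton B).sub hconv)
    (by rintro _ ⟨_, rfl, A, hA, rfl⟩; exact hB.sub (hherm A hA))
    (fun M hM => by
      obtain ⟨A, hA, hle⟩ := h M hM
      refine ⟨B - A, Set.sub_mem_sub rfl hA, ?_⟩
      rwa [Matrix.mul_sub, rtr_sub, sub_nonneg])
  exact ⟨A, hA, hpos⟩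

end Compactness

section Spectral

variable {n : Type} [Fintype n] [DecidableEq n] {A : Matrix n n ℂ}

/-- The star algebra of matrices that are diagonal in the eigenbasis of a Hermitian matrix `A`,
parametrized by their diagonals. Functions of `A` and spectral projections of `A` both live here. -/
def eigenDiag (hA : A.IsHermitian) : (n → ℂ) →⋆ₐ[ℂ] Matrix n n ℂ :=
  (Unitary.conjStarAlgAut ℂ (Matrix n n ℂ) hA.eigenvectorUnitary : _ →⋆ₐ[ℂ] _).comp
    { diagonalAlgHom ℂ with map_star' := fun d => (diagonal_conjTranspose d).symm }

lemma eigenDiag_apply (hA : A.IsHermitian) (d : n → ℂ) :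
    eigenDiag hA d = (hA.eigenvectorUnitary : Matrix n n ℂ) * diagonal d *
      (hA.eigenvectorUnitary : Matrix n n ℂ)ᴴ := rfl

lemma eigenDiag_eigenvalues (hA : A.IsHermitian) :
    eigenDiag hA (fun i => (hA.eigenvalues i : ℂ)) = A := by
  conv_rhs => rw [hA.spectral_theorem]
  rfl

lemma eigenDiag_conjTranspose (hA : A.IsHermitian) (d : n → ℂ) :
    (eigenDiag hA d)ᴴ = eigenDiag hA (star d) := (map_star (eigenDiag hA) d).symm

lemma rtr_eigenDiag_mul (hA : A.IsHermitian) (d : n → ℝ) (B : Matrix n n ℂ) :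
    rtr (eigenDiag hA (fun i => (d i : ℂ)) * B) = ∑ i, d i *
      (((hA.eigenvectorUnitary : Matrix n n ℂ)ᴴ * B *
        (hA.eigenvectorUnitary : Matrix n n ℂ)) i i).re := by
  rw [eigenDiag_apply, Matrix.mul_assoc, Matrix.mul_assoc, rtr_mul_comm, Matrix.mul_assoc]
  simp [rtr, trace, diagonal_mul]

lemma matFun_eq_eigenDiag (hA : A.IsHermitian) (f : ℝ → ℝ) :
    matFun f A = eigenDiag hA (fun i => (f (hA.eigenvalues i) : ℂ)) := by
  rw [matFun, dif_pos hA]; rfl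

/-- The complex power `|A| ^ z` of a Hermitian matrix, taken on the support of `A`. It restricts to
`mpow A` at real exponents for positive semidefinite `A`, and is entire in `z`. As for `matFun`, it
is `0` when `A` is not Hermitian. -/
def cpow (A : Matrix n n ℂ) (z : ℂ) : Matrix n n ℂ :=
  if hA : A.IsHermitian then
    eigenDiag hA fun i => if hA.eigenvalues i = 0 then 0
      else Complex.exp (z * Real.log (hA.eigenvalues i))
  else 0

lemma cpow_mul_cpow (A : Matrix n n ℂ) (z w : ℂ) : cpow A z * cpow A w = cpow A (z + w) := by
  by_cases hA : A.IsHermitian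
  · simp only [cpow, dif_pos hA, ← map_mul]
    congr 1 with i
    by_cases h0 : hA.eigenvalues i = 0 <;> simp [h0, add_mul, Complex.exp_add]
  · simp [cpow, hA]

lemma conjTranspose_cpow (A : Matrix n n ℂ) (z : ℂ) : (cpow A z)ᴴ = cpow A (star z) := by
  by_cases hA : A.IsHermitian
  · simp only [cpow, dif_pos hA, eigenDiag_conjTranspose]
    congr 1 with i
    by_cases h0 : hA.eigenvalues i = 0 <;> simp [h0, ← Complex.exp_conj]
  · simp [cpow, hA]

lemma cpow_mul_conjTranspose_self (A : Matrix n n ℂ) (z : ℂ) :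
    cpow A z * (cpow A z)ᴴ = cpow A (2 * z.re : ℝ) := by
  rw [conjTranspose_cpow, cpow_mul_cpow, Complex.star_def, Complex.add_conj]

lemma conjTranspose_cpow_mul_self (A : Matrix n n ℂ) (z : ℂ) :
    (cpow A z)ᴴ * cpow A z = cpow A (2 * z.re : ℝ) := by
  rw [← cpow_mul_conjTranspose_self, conjTranspose_cpow, cpow_mul_cpow, cpow_mul_cpow, add_comm]

lemma isHermitian_cpow_ofReal (A : Matrix n n ℂ) (t : ℝ) : (cpow A t).IsHermitian := by
  rw [IsHermitian, conjTranspose_cpow, Complex.star_def, Complex.conj_ofReal]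

lemma posSemidef_cpow_ofReal (A : Matrix n n ℂ) (t : ℝ) : (cpow A t).PosSemidef := by
  have h := posSemidef_self_mul_conjTranspose (cpow A (t / 2 : ℝ))
  rwa [cpow_mul_conjTranspose_self, Complex.ofReal_re, mul_div_cancel₀ t two_ne_zero] at h

lemma isStarProjection_cpow_zero (A : Matrix n n ℂ) : IsStarProjection (cpow A 0) where
  isIdempotentElem := by rw [IsIdempotentElem, cpow_mul_cpow, add_zero]
  isSelfAdjoint := by rw [IsSelfAdjoint, star_eq_conjTranspose, conjTranspose_cpow, star_zero]

lemma mpow_eq_cpow (hA : A.PosSemidef) (t : ℝ) : mpow A t = cpow A t := by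
  rw [mpow, matFun_eq_eigenDiag hA.1, cpow, dif_pos hA.1]
  congr 1 with i
  split_ifs with h0
  · simp
  · rw [Real.rpow_def_of_pos ((hA.eigenvalues_nonneg i).lt_of_ne' h0), mul_comm]
    push_cast; rfl

lemma cpow_one (hA : A.PosSemidef) : cpow A 1 = A := by
  conv_rhs => rw [← eigenDiag_eigenvalues hA.1]
  rw [cpow, dif_pos hA.1]
  congr 1 with i
  split_ifs with h0
  · simp [h0]
  · rw [one_mul, ← Complex.ofReal_exp, Real.exp_log ((hA.eigenvalues_nonneg i).lt_of_ne' h0)]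

lemma msqrt_eq_cpow (hA : A.PosSemidef) : msqrt A = cpow A (1 / 2 : ℝ) := by
  have hsqrt : Real.sqrt = fun x : ℝ => if x = 0 then 0 else x ^ (1 / 2 : ℝ) := by
    funext x
    split_ifs with h0
    · simp [h0]
    · exact Real.sqrt_eq_rpow x
  rw [msqrt, hsqrt]
  exact mpow_eq_cpow hA _

lemma mul_cpow_zero {m : Type} (hA : A.PosSemidef) (D : Matrix m n ℂ)
    (h : ∀ v, A *ᵥ v = 0 → D *ᵥ v = 0) : D * cpow A 0 = D := by
  have hA0 : A * (1 - cpow A 0) = 0 := by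
    rw [Matrix.mul_sub, Matrix.mul_one]
    nth_rw 2 [← cpow_one hA]
    rw [cpow_mul_cpow, add_zero, cpow_one hA, sub_self]
  have hD0 : D * (1 - cpow A 0) = 0 := by
    ext i j
    exact congrFun (h ((1 - cpow A 0).col j) (funext fun i => congrFun (congrFun hA0 i) j)) i
  rw [Matrix.mul_sub, Matrix.mul_one, sub_eq_zero] at hD0
  exact hD0.symm

lemma exists_isContraction_eq_mul_msqrt {m : Type} [Fintype m] (D : Matrix m n ℂ) :
    ∃ U : Matrix m n ℂ, IsContraction U ∧ D = U * msqrt (Dᴴ * D) := by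
  have hX := posSemidef_conjTranspose_mul_self D
  set X := Dᴴ * D with hXD
  refine ⟨D * cpow X (-1 / 2 : ℝ), ?_, ?_⟩
  · have hU : (D * cpow X (-1 / 2 : ℝ))ᴴ * (D * cpow X (-1 / 2 : ℝ)) = cpow X 0 := by
      rw [conjTranspose_mul, (isHermitian_cpow_ofReal X _).eq, Matrix.mul_assoc,
        ← Matrix.mul_assoc Dᴴ, ← hXD]
      nth_rw 2 [← cpow_one hX]
      rw [cpow_mul_cpow, cpow_mul_cpow]
      norm_num
    rw [IsContraction, hU]
    exact posSemidef_one_sub_of_isStarProjection (isStarProjection_cpow_zero X)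
  · have hexp : ((-1 / 2 : ℝ) + (1 / 2 : ℝ) : ℂ) = 0 := by norm_num
    rw [msqrt_eq_cpow hX, Matrix.mul_assoc, cpow_mul_cpow, hexp]
    exact (mul_cpow_zero hX D fun v => (conjTranspose_mul_self_mulVec_eq_zero D v).1).symm

end Spectral

section Fidelity

variable {n m : Type} [Fintype n] [Fintype m]

lemma rtr_conjTranspose_mul_le_traceNorm [DecidableEq n] (K : Matrix m n ℂ) {L : Matrix m n ℂ}
    (hL : IsContraction L) : rtr (Kᴴ * L) ≤ traceNorm K := by
  classical
  obtain ⟨W, hW, hKW⟩ := exists_isContraction_eq_mul_msqrt K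
  have habs : (msqrt (Kᴴ * K)).PosSemidef := by
    rw [msqrt_eq_cpow (posSemidef_conjTranspose_mul_self K)]
    exact posSemidef_cpow_ofReal _ _
  calc rtr (Kᴴ * L) = rtr (Wᴴ * L * msqrt (Kᴴ * K)) := by
        conv_lhs => rw [hKW, conjTranspose_mul, habs.1.eq, Matrix.mul_assoc, rtr_mul_comm]
    _ ≤ ‖(Wᴴ * L * msqrt (Kᴴ * K)).trace‖ := Complex.re_le_norm _
    _ ≤ traceNorm K := (hW.conjTranspose.mul hL).norm_trace_mul_le habs

lemma rtr_toBlocks₁₂_le_of_posSemidef [DecidableEq n] {B : Matrix (n ⊕ n) (n ⊕ n) ℂ}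
    (hB : B.PosSemidef) :
    rtr B.toBlocks₁₂ ≤ rtr (msqrt (msqrt B.toBlocks₂₂ * B.toBlocks₁₁ * msqrt B.toBlocks₂₂)) := by
  obtain ⟨C, rfl⟩ := exists_eq_conjTranspose_mul_self hB
  set A := C.toCols₁
  set D := C.toCols₂
  have hC : Cᴴ * C = fromBlocks (Aᴴ * A) (Aᴴ * D) (Dᴴ * A) (Dᴴ * D) := by
    rw [← fromCols_toCols C, conjTranspose_fromCols_eq_fromRows_conjTranspose,
      fromRows_mul_fromCols]
  rw [hC, toBlocks_fromBlocks₁₁, toBlocks_fromBlocks₁₂, toBlocks_fromBlocks₂₂]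
  obtain ⟨U, hU, hDU⟩ := exists_isContraction_eq_mul_msqrt D
  set S := msqrt (Dᴴ * D)
  have hS : Sᴴ = S := by
    rw [show S = _ from msqrt_eq_cpow (posSemidef_conjTranspose_mul_self D)]
    exact isHermitian_cpow_ofReal _ _
  calc rtr (Aᴴ * D) = rtr ((A * S)ᴴ * U) := by
        conv_lhs => rw [hDU, ← Matrix.mul_assoc, rtr_mul_comm]
        rw [conjTranspose_mul, hS, Matrix.mul_assoc]
    _ ≤ traceNorm (A * S) := rtr_conjTranspose_mul_le_traceNorm _ hU
    _ = rtr (msqrt (S * (Aᴴ * A) * S)) := by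
        rw [traceNorm, conjTranspose_mul, hS]; simp only [Matrix.mul_assoc]

/-- Positive semidefinite extensions of `ρ` to a doubled space whose lower corner is normalized
and whose off-diagonal corner has trace at least `c`. Their lower corners are states with fidelity
at least `c ^ 2` to `ρ` when `0 ≤ c`, and unlike the fidelity the constraint on `c` is affine. -/
def fidelityCouplings (ρ : Matrix n n ℂ) (c : ℝ) : Set (Matrix (n ⊕ n) (n ⊕ n) ℂ) :=
  {B | B.PosSemidef ∧ B.toBlocks₁₁ = ρ ∧ B.toBlocks₂₂.trace = 1 ∧ c ≤ rtr B.toBlocks₁₂}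

lemma convex_fidelityCouplings (ρ : Matrix n n ℂ) (c : ℝ) : Convex ℝ (fidelityCouplings ρ c) := by
  rintro A ⟨hA, hA₁, hA₂, hAc⟩ B ⟨hB, hB₁, hB₂, hBc⟩ a b ha hb hab
  refine ⟨convex_setOf_posSemidef hA hB ha hb hab, ?_, ?_, ?_⟩
  · change a • A.toBlocks₁₁ + b • B.toBlocks₁₁ = ρ
    rw [hA₁, hB₁, ← add_smul, hab, one_smul]
  · change (a • A.toBlocks₂₂ + b • B.toBlocks₂₂).trace = 1
    rw [trace_add, trace_smul, trace_smul, hA₂, hB₂, ← add_smul, hab, one_smul]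
  · change c ≤ rtr (a • A.toBlocks₁₂ + b • B.toBlocks₁₂)
    rw [rtr_add, rtr_smul, rtr_smul]
    calc c = a * c + b * c := by rw [← add_mul, hab, one_mul]
      _ ≤ _ := by gcongr

lemma isCompact_fidelityCouplings (ρ : Matrix n n ℂ) (c : ℝ) :
    IsCompact (fidelityCouplings ρ c) := by
  refine (isCompact_setOf_posSemidef_rtr_le (rtr ρ + 1)).of_isClosed_subset ?_ ?_
  · exact isClosed_setOf_posSemidef.inter <|
      (isClosed_eq (continuous_id.matrix_submatrix _ _) continuous_const).inter <|
      (isClosed_eq (continuous_id.matrix_submatrix _ _).matrix_trace continuous_const).inter <|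
      isClosed_le continuous_const (continuous_rtr.comp (continuous_id.matrix_submatrix _ _))
  · rintro B ⟨hB, hB₁, hB₂, -⟩
    refine ⟨hB, le_of_eq ?_⟩
    rw [← hB₁, ← Complex.one_re, ← hB₂]
    simp [rtr, trace, Fintype.sum_sum_type, toBlocks₁₁, toBlocks₂₂]

lemma fromBlocks_mem_fidelityCouplings {ρ : Matrix n n ℂ} (hρ : ρ.PosSemidef) {A : Matrix n n ℂ}
    (hA : (Aᴴ * ρ * A).trace = 1) {c : ℝ} (hc : c ≤ rtr (ρ * A)) :
    fromBlocks ρ (ρ * A) (Aᴴ * ρ) (Aᴴ * ρ * A) ∈ fidelityCouplings ρ c := by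
  classical
  refine ⟨?_, rfl, hA, hc⟩
  have h := hρ.conjTranspose_mul_mul_same (fromCols (1 : Matrix n n ℂ) A)
  rwa [conjTranspose_fromCols_eq_fromRows_conjTranspose, fromRows_mul, fromRows_mul_fromCols,
    conjTranspose_one, Matrix.one_mul, Matrix.mul_one, Matrix.mul_one] at h

lemma isState_of_mem_fidelityCouplings {ρ : Matrix n n ℂ} {c : ℝ}
    {B : Matrix (n ⊕ n) (n ⊕ n) ℂ} (hB : B ∈ fidelityCouplings ρ c) : IsState B.toBlocks₂₂ :=
  ⟨hB.1.submatrix _, hB.2.2.1⟩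

lemma sineDist_le_of_mem_fidelityCouplings [DecidableEq n] {ρ : Matrix n n ℂ} {c : ℝ} (hc : 0 ≤ c)
    {B : Matrix (n ⊕ n) (n ⊕ n) ℂ} (hB : B ∈ fidelityCouplings ρ c) :
    sineDist ρ B.toBlocks₂₂ ≤ Real.sqrt (1 - c ^ 2) := by
  obtain ⟨hpos, rfl, -, hcB⟩ := hB
  have := hcB.trans (rtr_toBlocks₁₂_le_of_posSemidef hpos)
  unfold sineDist fidelity
  gcongr

end Fidelity

section StripRegular

variable {E F : Type*} [NormedAddCommGroup E] [NormedSpace ℂ E] [NormedAddCommGroup F]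
  [NormedSpace ℂ F]

/-- The hypothesis on a function that the Hadamard three-lines theorem asks for, strengthened from
holomorphic to entire: it is entire and bounded on the strip `0 ≤ re z ≤ 1`. -/
def IsStripRegular (f : ℂ → E) : Prop :=
  Differentiable ℂ f ∧ BddAbove ((norm ∘ f) '' verticalClosedStrip 0 1)

lemma isStripRegular_const (c : E) : IsStripRegular fun _ => c :=
  ⟨differentiable_const c, ‖c‖, by rintro _ ⟨-, -, rfl⟩; rfl⟩

lemma IsStripRegular.mul {R : Type*} [NormedRing R] [NormedAlgebra ℂ R] {f g : ℂ → R}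
    (hf : IsStripRegular f) (hg : IsStripRegular g) : IsStripRegular fun z => f z * g z := by
  obtain ⟨hf, a, ha⟩ := hf
  obtain ⟨hg, b, hb⟩ := hg
  refine ⟨hf.mul hg, a * b, ?_⟩
  rintro _ ⟨z, hz, rfl⟩
  have haz := ha ⟨z, hz, rfl⟩
  exact (norm_mul_le _ _).trans (mul_le_mul haz (hb ⟨z, hz, rfl⟩) (norm_nonneg _)
    ((norm_nonneg _).trans haz))

lemma IsStripRegular.linearMap_comp [FiniteDimensional ℂ E] {f : ℂ → E} (hf : IsStripRegular f)
    (L : E →ₗ[ℂ] F) : IsStripRegular fun z => L (f z) := by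
  obtain ⟨hf, a, ha⟩ := hf
  refine ⟨L.toContinuousLinearMap.differentiable.comp hf, ‖L.toContinuousLinearMap‖ * a, ?_⟩
  rintro _ ⟨z, hz, rfl⟩
  exact L.toContinuousLinearMap.le_opNorm_of_le (ha ⟨z, hz, rfl⟩)

lemma isStripRegular_pi {ι : Type*} [Fintype ι] {f : ℂ → ι → E}
    (hf : ∀ i, IsStripRegular fun z => f z i) : IsStripRegular f := by
  choose hf a ha using hf
  refine ⟨differentiable_pi.2 hf, ‖a‖, ?_⟩
  rintro _ ⟨z, hz, rfl⟩
  exact (pi_norm_le_iff_of_nonneg (norm_nonneg a)).2 fun i =>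
    (ha i ⟨z, hz, rfl⟩).trans ((le_abs_self _).trans (norm_le_pi_norm a i))

lemma isStripRegular_exp_affine (a b : ℝ) :
    IsStripRegular fun z => Complex.exp (a * z + b) := by
  refine ⟨by fun_prop, Real.exp (|a| + b), ?_⟩
  rintro _ ⟨z, ⟨hz0 : 0 ≤ z.re, hz1 : z.re ≤ 1⟩, rfl⟩
  have haz : a * z.re ≤ |a| := by
    calc a * z.re ≤ |a| * z.re := by gcongr; exact le_abs_self a
      _ ≤ |a| := mul_le_of_le_one_right (abs_nonneg a) hz1
  simpa [Complex.norm_exp] using haz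

open scoped Matrix.Norms.L2Operator in
lemma isStripRegular_cpow_affine {n : Type} [Fintype n] [DecidableEq n] (A : Matrix n n ℂ)
    (a b : ℝ) : IsStripRegular fun z => cpow A (a * z + b) := by
  by_cases hA : A.IsHermitian
  · simp only [cpow, dif_pos hA]
    refine IsStripRegular.linearMap_comp (isStripRegular_pi fun i => ?_)
      (eigenDiag hA).toAlgHom.toLinearMap
    by_cases h0 : hA.eigenvalues i = 0
    · simpa [h0] using isStripRegular_const (0 : ℂ)
    · simpa [h0, add_mul, mul_right_comm] using
        isStripRegular_exp_affine (a * Real.log (hA.eigenvalues i))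
          (b * Real.log (hA.eigenvalues i))
  · simpa [cpow, hA] using isStripRegular_const (0 : Matrix n n ℂ)

end StripRegular

section Interpolation

variable {n m : Type} [Fintype n] [DecidableEq n] [Fintype m] {α : ℝ} {ρ σ : Matrix n n ℂ}

/-- The trace functional `Tr[ρ ^ α σ ^ (1 - α)]` inside the Petz–Rényi divergence. -/
def petzTrace (α : ℝ) (ρ σ : Matrix n n ℂ) : ℝ := rtr (mpow ρ α * mpow σ (1 - α))

/-- A holomorphic path joining the operators of `petzTrace α ρ σ` to `σ`: up to unitary phases and
reordering it is `ρ ^ α σ ^ (1 - α)` on the line `re z = 0` and `σ` on the line `re z = 1`, and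
it passes through `ρ` at `z = (α - 1) / α`. -/
def petzPath (α : ℝ) (ρ σ : Matrix n n ℂ) (z : ℂ) : Matrix n n ℂ :=
  cpow σ ((α / 2 : ℝ) * z + ((1 - α) / 2 : ℝ)) * cpow ρ ((-α : ℝ) * z + α) *
    cpow σ ((α / 2 : ℝ) * z + ((1 - α) / 2 : ℝ))

lemma petzTrace_nonneg (hρ : ρ.PosSemidef) (hσ : σ.PosSemidef) : 0 ≤ petzTrace α ρ σ := by
  rw [petzTrace, mpow_eq_cpow hρ, mpow_eq_cpow hσ]
  exact rtr_mul_nonneg (posSemidef_cpow_ofReal _ _) (posSemidef_cpow_ofReal _ _)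

lemma petzPath_interpolation_point (hρ : ρ.PosSemidef) (hσ : σ.PosSemidef) (hs : SuppLE ρ σ)
    (hα : α ≠ 0) : petzPath α ρ σ ((α - 1) / α : ℝ) = ρ := by
  have hright : ρ * cpow σ 0 = ρ := mul_cpow_zero hσ ρ hs
  have hleft : cpow σ 0 * ρ = ρ := by
    simpa [conjTranspose_cpow, hρ.1.eq] using congrArg conjTranspose hright
  have hα' : (α : ℂ) ≠ 0 := Complex.ofReal_ne_zero.2 hα
  have hσ_exp : (α / 2 : ℝ) * ((α - 1) / α : ℝ) + ((1 - α) / 2 : ℝ) = (0 : ℂ) := by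
    push_cast; field_simp; ring
  have hρ_exp : (-α : ℝ) * ((α - 1) / α : ℝ) + α = (1 : ℂ) := by
    push_cast; field_simp; ring
  rw [petzPath, hσ_exp, hρ_exp, cpow_one hρ, hleft, hright]

lemma norm_trace_petzPath_le_of_re_eq_zero (hρ : ρ.PosSemidef) (hσ : σ.PosSemidef)
    {C : Matrix m n ℂ} (hC : IsContraction C) {z : ℂ} (hz : z.re = 0) :
    ‖(C * petzPath α ρ σ z * Cᴴ).trace‖ ≤ petzTrace α ρ σ := by
  set X := cpow σ ((α / 2 : ℝ) * z + ((1 - α) / 2 : ℝ))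
  set Z := cpow ρ ((-α / 2 : ℝ) * z + (α / 2 : ℝ))
  have hpath : petzPath α ρ σ z = X * Z * (Z * X) := by
    rw [← Matrix.mul_assoc, Matrix.mul_assoc X, cpow_mul_cpow, petzPath]
    congr 3
    push_cast; ring
  have hσ_exp : 2 * ((α / 2 : ℝ) * z + ((1 - α) / 2 : ℝ)).re = 1 - α := by
    rw [Complex.add_re, Complex.re_ofReal_mul, hz, Complex.ofReal_re]; ring
  have hρ_exp : 2 * ((-α / 2 : ℝ) * z + (α / 2 : ℝ)).re = α := by
    rw [Complex.add_re, Complex.re_ofReal_mul, hz, Complex.ofReal_re]; ring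
  have hleft : rtr (X * Z * (X * Z)ᴴ) = petzTrace α ρ σ := by
    rw [conjTranspose_mul, Matrix.mul_assoc, rtr_mul_comm, ← Matrix.mul_assoc, Matrix.mul_assoc,
      cpow_mul_conjTranspose_self, conjTranspose_cpow_mul_self, hσ_exp, hρ_exp, petzTrace,
      mpow_eq_cpow hρ, mpow_eq_cpow hσ]
  have hright : rtr ((Z * X)ᴴ * (Z * X)) = petzTrace α ρ σ := by
    rw [conjTranspose_mul, Matrix.mul_assoc, rtr_mul_comm, ← Matrix.mul_assoc, Matrix.mul_assoc,
      cpow_mul_conjTranspose_self, conjTranspose_cpow_mul_self, hσ_exp, hρ_exp, petzTrace,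
      mpow_eq_cpow hρ, mpow_eq_cpow hσ]
  rw [hpath]
  linarith [hC.two_mul_norm_trace_mul_mul_le (X * Z) (Z * X)]

lemma norm_trace_petzPath_le_of_re_eq_one (hσ : σ.PosSemidef) (C : Matrix m n ℂ) {z : ℂ}
    (hz : z.re = 1) : ‖(C * petzPath α ρ σ z * Cᴴ).trace‖ ≤ rtr (C * σ * Cᴴ) := by
  set X := cpow σ ((α / 2 : ℝ) * z + ((1 - α) / 2 : ℝ)) with hX
  set Y := cpow ρ ((-α : ℝ) * z + α) with hY
  have hσ_exp : 2 * ((α / 2 : ℝ) * z + ((1 - α) / 2 : ℝ)).re = 1 := by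
    rw [Complex.add_re, Complex.re_ofReal_mul, hz, Complex.ofReal_re]; ring
  have hρ_exp : 2 * ((-α : ℝ) * z + α).re = 0 := by simp [hz]
  have hXX : X * Xᴴ = σ := by
    rw [cpow_mul_conjTranspose_self, hσ_exp, Complex.ofReal_one, cpow_one hσ]
  have hXX' : Xᴴ * X = σ := by
    rw [conjTranspose_cpow_mul_self, hσ_exp, Complex.ofReal_one, cpow_one hσ]
  have hYcontr : IsContraction Yᴴ := by
    rw [IsContraction, conjTranspose_conjTranspose, cpow_mul_conjTranspose_self, hρ_exp]
    exact posSemidef_one_sub_of_isStarProjection (isStarProjection_cpow_zero ρ)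
  have hleft : rtr (C * X * Y * (C * X * Y)ᴴ) ≤ rtr (C * σ * Cᴴ) := by
    have h := hYcontr.rtr_conjTranspose_mul_self_le (C * X)ᴴ
    rwa [← conjTranspose_mul, conjTranspose_conjTranspose, conjTranspose_conjTranspose,
      conjTranspose_mul C, ← Matrix.mul_assoc (C * X) Xᴴ, Matrix.mul_assoc C X Xᴴ, hXX] at h
  have hright : (X * Cᴴ)ᴴ * (X * Cᴴ) = C * σ * Cᴴ := by
    rw [conjTranspose_mul, conjTranspose_conjTranspose, ← Matrix.mul_assoc, Matrix.mul_assoc C,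
      hXX']
  have hpath : C * petzPath α ρ σ z * Cᴴ = C * X * Y * (X * Cᴴ) := by
    simp only [petzPath, ← hX, ← hY, Matrix.mul_assoc]
  have amgm := two_mul_norm_trace_mul_le (C * X * Y) (X * Cᴴ)
  rw [← hpath, hright] at amgm
  linarith

open scoped Matrix.Norms.L2Operator in
lemma isStripRegular_petzPath (α : ℝ) (ρ σ : Matrix n n ℂ) : IsStripRegular (petzPath α ρ σ) :=
  ((isStripRegular_cpow_affine σ _ _).mul (isStripRegular_cpow_affine ρ _ _)).mul
    (isStripRegular_cpow_affine σ _ _)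

open scoped Matrix.Norms.L2Operator in
theorem rtr_conj_le_petzTrace_rpow_mul_rpow (hρ : ρ.PosSemidef) (hσ : σ.PosSemidef)
    (hs : SuppLE ρ σ) (hα : 1 < α) {C : Matrix m n ℂ} (hC : IsContraction C) :
    rtr (C * ρ * Cᴴ) ≤ petzTrace α ρ σ ^ (1 / α) * rtr (C * σ * Cᴴ) ^ ((α - 1) / α) := by
  have hα0 : 0 < α := one_pos.trans hα
  let L : Matrix n n ℂ →ₗ[ℂ] ℂ := traceLinearMap m ℂ ℂ ∘ₗ
    mulRightLinearMap m ℂ Cᴴ ∘ₗ mulLeftLinearMap n ℂ C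
  obtain ⟨hdiff, hbdd⟩ := (isStripRegular_petzPath α ρ σ).linearMap_comp L
  have hθ : (((α - 1) / α : ℝ) : ℂ) ∈ verticalClosedStrip 0 1 := by
    refine ⟨div_nonneg (by linarith) hα0.le, (div_le_one hα0).2 (by linarith)⟩
  have hlines := norm_le_interp_of_mem_verticalClosedStrip' zero_lt_one hθ hdiff.diffContOnCl hbdd
    (fun z hz => norm_trace_petzPath_le_of_re_eq_zero hρ hσ hC hz)
    (fun z hz => norm_trace_petzPath_le_of_re_eq_one hσ C hz)
  have hweight : 1 - (α - 1) / α = 1 / α := by field_simp; ring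
  rw [petzPath_interpolation_point hρ hσ hs hα0.ne', Complex.ofReal_re, sub_zero, sub_zero,
    div_one, hweight] at hlines
  exact (Complex.re_le_norm _).trans hlines

end Interpolation

section TailBound

lemma le_mul_rpow_of_le_rpow_mul_rpow {α x y Q r : ℝ} (hα : 1 < α) (hQ : 0 ≤ Q) (hy : 0 ≤ y)
    (hr : 0 < r) (hyx : r * y ≤ x) (h : x ≤ Q ^ (1 / α) * y ^ ((α - 1) / α)) :
    x ≤ Q * r ^ (1 - α) := by
  have hα0 : 0 < α := one_pos.trans hα
  rcases (mul_nonneg hr.le hy |>.trans hyx).eq_or_lt with rfl | hx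
  · positivity
  have hpow : x ^ α ≤ Q * (x / r) ^ (α - 1) := calc
    x ^ α ≤ (Q ^ (1 / α) * y ^ ((α - 1) / α)) ^ α := by gcongr
    _ = Q * y ^ (α - 1) := by
      rw [Real.mul_rpow (by positivity) (by positivity), ← Real.rpow_mul hQ, ← Real.rpow_mul hy,
        div_mul_cancel₀ _ hα0.ne', div_mul_cancel₀ _ hα0.ne', Real.rpow_one]
    _ ≤ Q * (x / r) ^ (α - 1) := by
      have : y ≤ x / r := (le_div_iff₀' hr).2 hyx
      have : 0 ≤ α - 1 := by linarith
      gcongr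
  have hxα : 0 < x ^ (α - 1) := by positivity
  refine le_of_mul_le_mul_right ?_ hxα
  calc x * x ^ (α - 1) = x ^ α := by rw [Real.rpow_sub_one hx.ne', mul_div_cancel₀ _ hx.ne']
    _ ≤ Q * (x / r) ^ (α - 1) := hpow
    _ = Q * r ^ (1 - α) * x ^ (α - 1) := by
      rw [Real.div_rpow hx.le hr.le, ← neg_sub α 1, Real.rpow_neg hr.le]
      ring

variable {n : Type} [Fintype n] [DecidableEq n] {α : ℝ} {ρ σ : Matrix n n ℂ}

lemma rtr_conj_le_petzTrace_mul_rpow {m : Type} [Fintype m] (hρ : ρ.PosSemidef)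
    (hσ : σ.PosSemidef) (hs : SuppLE ρ σ) (hα : 1 < α) {C : Matrix m n ℂ} (hC : IsContraction C)
    {r : ℝ} (hr : 0 < r) (h : r * rtr (C * σ * Cᴴ) ≤ rtr (C * ρ * Cᴴ)) :
    rtr (C * ρ * Cᴴ) ≤ petzTrace α ρ σ * r ^ (1 - α) :=
  le_mul_rpow_of_le_rpow_mul_rpow hα (petzTrace_nonneg hρ hσ)
    (rtr_nonneg (hσ.mul_mul_conjTranspose_same C)) hr h
    (rtr_conj_le_petzTrace_rpow_mul_rpow hρ hσ hs hα hC)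

lemma petzTrace_pos (hρ : IsState ρ) (hσ : σ.PosSemidef) (hs : SuppLE ρ σ) (hα : 1 < α) :
    0 < petzTrace α ρ σ := by
  refine (petzTrace_nonneg hρ.1 hσ).lt_of_ne fun hzero => ?_
  have hinterp := rtr_conj_le_petzTrace_rpow_mul_rpow hρ.1 hσ hs hα
    (isContraction_of_isStarProjection (.one _))
  rw [← hzero, Real.zero_rpow (by positivity), zero_mul, conjTranspose_one, Matrix.mul_one,
    Matrix.one_mul, rtr, hρ.2, Complex.one_re] at hinterp
  linarith

end TailBound

section NeymanPearson

variable {n : Type} [Fintype n] [DecidableEq n]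

lemma rtr_mul_eigenDiag_conj {M : Matrix n n ℂ} (hM : M.IsHermitian) (d : n → ℝ)
    (B : Matrix n n ℂ) :
    rtr (M * (eigenDiag hM (fun i => (d i : ℂ)) * B * eigenDiag hM (fun i => (d i : ℂ)))) =
      rtr (eigenDiag hM (fun i => ((d i ^ 2 * hM.eigenvalues i : ℝ) : ℂ)) * B) := by
  set D := eigenDiag hM (fun i => (d i : ℂ))
  have hprod : eigenDiag hM (fun i => ((d i ^ 2 * hM.eigenvalues i : ℝ) : ℂ)) = D * M * D := by
    conv_rhs => rw [show M = _ from (eigenDiag_eigenvalues hM).symm]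
    rw [← map_mul, ← map_mul]
    congr 1 with i
    simp only [Pi.mul_apply]
    push_cast
    ring
  rw [hprod, ← Matrix.mul_assoc, rtr_mul_comm]
  simp only [Matrix.mul_assoc]

lemma exists_isStarProjection_rtr_mul_le {M σ : Matrix n n ℂ} (hM : M.PosSemidef)
    (hσ : σ.PosSemidef) (ρ : Matrix n n ℂ) {r : ℝ} (hr : 0 ≤ r) :
    ∃ T : Matrix n n ℂ, IsStarProjection T ∧ rtr (M * (T * ρ * T)) ≤ r * rtr (M * σ) ∧
      r * rtr ((1 - T) * σ) ≤ rtr ((1 - T) * ρ) := by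
  let E (d : n → ℝ) : Matrix n n ℂ := eigenDiag hM.1 fun i => (d i : ℂ)
  obtain ⟨p, hp, hpσ⟩ : ∃ p : Matrix n n ℂ → n → ℝ,
      (∀ d B, rtr (E d * B) = ∑ i, d i * p B i) ∧ ∀ i, 0 ≤ p σ i :=
    ⟨_, rtr_eigenDiag_mul hM.1, fun i =>
      (Complex.le_def.1 (hσ.conjTranspose_mul_mul_same _).diag_nonneg).1⟩
  classical
  let d (i : n) : ℝ := if p ρ i ≤ r * p σ i then 1 else 0
  have hsub : 1 - E d = E fun i => 1 - d i := by
    rw [← map_one (eigenDiag hM.1), ← map_sub]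
    congr 1 with i
    simp
  refine ⟨E d, IsStarProjection.map ⟨?_, ?_⟩ (eigenDiag hM.1), ?_, ?_⟩
  · funext i
    by_cases h : p ρ i ≤ r * p σ i <;> simp [d, h]
  · funext i
    simp
  · have hMσ : rtr (M * σ) = ∑ i, hM.1.eigenvalues i * p σ i := by
      rw [← hp]
      exact congrArg (fun A => rtr (A * σ)) (eigenDiag_eigenvalues hM.1).symm
    rw [rtr_mul_eigenDiag_conj hM.1, hp fun i => d i ^ 2 * hM.1.eigenvalues i, hMσ, Finset.mul_sum]
    refine Finset.sum_le_sum fun i _ => ?_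
    have hl := hM.eigenvalues_nonneg i
    by_cases h : p ρ i ≤ r * p σ i
    · simp only [d, if_pos h]
      linarith [mul_le_mul_of_nonneg_left h hl]
    · simp only [d, if_neg h]
      linarith [mul_nonneg hr (mul_nonneg hl (hpσ i))]
  · rw [hsub, hp, hp, Finset.mul_sum]
    refine Finset.sum_le_sum fun i _ => ?_
    by_cases h : p ρ i ≤ r * p σ i
    · simp [d, h]
    · simpa [d, h] using (not_le.1 h).le

end NeymanPearson

section Smoothing

variable {n : Type} [Fintype n] [DecidableEq n] {α : ℝ} {ρ σ : Matrix n n ℂ}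

lemma exists_isStarProjection_rtr_mul_le_sq (hρ : ρ.PosSemidef) (hσ : σ.PosSemidef)
    (hs : SuppLE ρ σ) (hα : 1 < α) {r δ : ℝ} (hr : 0 < r)
    (hδ : petzTrace α ρ σ * r ^ (1 - α) ≤ δ) {M : Matrix n n ℂ} (hM : M.PosSemidef) :
    ∃ T : Matrix n n ℂ, IsStarProjection T ∧ rtr (M * (T * ρ * T)) ≤ r * rtr (M * σ) ∧
      rtr ((1 - T) * ρ) ≤ δ := by
  obtain ⟨T, hT, hTM, hTr⟩ := exists_isStarProjection_rtr_mul_le hM hσ ρ hr.le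
  refine ⟨T, hT, hTM, ?_⟩
  have hC := hT.one_sub
  have hconj (B : Matrix n n ℂ) : rtr ((1 - T) * B * (1 - T)ᴴ) = rtr ((1 - T) * B) := by
    rw [rtr_mul_comm, ← star_eq_conjTranspose, hC.isSelfAdjoint.star_eq, ← Matrix.mul_assoc,
      hC.isIdempotentElem.eq]
  have htail := rtr_conj_le_petzTrace_mul_rpow hρ hσ hs hα (isContraction_of_isStarProjection hC) hr
  rw [hconj, hconj] at htail
  exact (htail hTr).trans hδ

lemma exists_mem_fidelityCouplings_rtr_mul_le (hρ : IsState ρ) {T M : Matrix n n ℂ}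
    (hT : IsStarProjection T) {δ b : ℝ} (hδ : δ < 1) (hTδ : rtr ((1 - T) * ρ) ≤ δ)
    (hb : 0 ≤ b) (hTM : rtr (M * (T * ρ * T)) ≤ b) :
    ∃ B ∈ fidelityCouplings ρ (Real.sqrt (1 - δ)), rtr (M * B.toBlocks₂₂) ≤ b / (1 - δ) := by
  set t := rtr (ρ * T)
  have hTT : Tᴴ = T := hT.isSelfAdjoint.star_eq
  have ht : 1 - δ ≤ t := by
    have hone : rtr ρ = 1 := by rw [rtr, hρ.2, Complex.one_re]
    rw [Matrix.sub_mul, Matrix.one_mul, rtr_sub, rtr_mul_comm T, hone] at hTδ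
    linarith
  have ht0 : 0 < t := by linarith
  have hblock : ((√t)⁻¹ • T)ᴴ * ρ * ((√t)⁻¹ • T) = t⁻¹ • (T * ρ * T) := by
    rw [conjTranspose_smul, star_trivial, hTT, Matrix.smul_mul, Matrix.smul_mul, Matrix.mul_smul,
      smul_smul, ← mul_inv, Real.mul_self_sqrt ht0.le]
  have htrace : (T * ρ * T).trace = t := by
    have hpos := hρ.1.conjTranspose_mul_mul_same T
    rw [hTT] at hpos
    have hre : rtr (T * ρ * T) = t := by
      rw [Matrix.mul_assoc, rtr_mul_comm, Matrix.mul_assoc, hT.isIdempotentElem.eq]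
    exact Complex.ext hre (Complex.le_def.1 hpos.trace_nonneg).2.symm
  refine ⟨_, fromBlocks_mem_fidelityCouplings hρ.1 (A := (√t)⁻¹ • T) ?_ ?_, ?_⟩
  · rw [hblock, trace_smul, htrace, Complex.real_smul, ← Complex.ofReal_mul,
      inv_mul_cancel₀ ht0.ne', Complex.ofReal_one]
  · rw [Matrix.mul_smul, rtr_smul, inv_mul_eq_div, Real.div_sqrt]
    exact Real.sqrt_le_sqrt ht
  · rw [toBlocks_fromBlocks₂₂, hblock, Matrix.mul_smul, rtr_smul, inv_mul_eq_div]
    have : 0 < 1 - δ := by linarith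
    gcongr

theorem exists_isState_loewnerLE_smul (hρ : IsState ρ) (hσ : σ.PosSemidef) (hs : SuppLE ρ σ)
    (hα : 1 < α) {r δ : ℝ} (hr : 0 < r) (hδ : petzTrace α ρ σ * r ^ (1 - α) ≤ δ) (hδ1 : δ < 1) :
    ∃ X, IsState X ∧ sineDist ρ X ≤ Real.sqrt δ ∧ loewnerLE X ((r / (1 - δ)) • σ) := by
  have hlin : IsLinearMap ℝ (toBlocks₂₂ : Matrix (n ⊕ n) (n ⊕ n) ℂ → Matrix n n ℂ) :=
    ⟨fun _ _ => rfl, fun _ _ => rfl⟩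
  obtain ⟨_, ⟨B, hB, rfl⟩, hle⟩ := exists_loewnerLE_of_forall_exists_rtr_mul_le
    (S := toBlocks₂₂ '' fidelityCouplings ρ (√(1 - δ))) (B := (r / (1 - δ)) • σ)
    ((isCompact_fidelityCouplings _ _).image (continuous_id.matrix_submatrix _ _))
    ((convex_fidelityCouplings _ _).is_linear_image hlin)
    (by rintro _ ⟨B, hB, rfl⟩; exact (isState_of_mem_fidelityCouplings hB).1.1)
    (hσ.smul (div_nonneg hr.le (by linarith))).1 fun M hM => by
      obtain ⟨T, hT, hTM, hTδ⟩ := exists_isStarProjection_rtr_mul_le_sq hρ.1 hσ hs hα hr hδ hM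
      obtain ⟨B, hB, hBM⟩ := exists_mem_fidelityCouplings_rtr_mul_le hρ hT hδ1 hTδ
        (mul_nonneg hr.le (rtr_mul_nonneg hM hσ)) hTM
      refine ⟨_, ⟨B, hB, rfl⟩, hBM.trans_eq ?_⟩
      rw [Matrix.mul_smul, rtr_smul, div_mul_eq_mul_div]
  have hdist := sineDist_le_of_mem_fidelityCouplings (Real.sqrt_nonneg _) hB
  rw [Real.sq_sqrt (by linarith), sub_sub_cancel] at hdist
  exact ⟨_, isState_of_mem_fidelityCouplings hB, hdist, hle⟩

end Smoothing

section Divergences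

variable {n : Type} [Fintype n] [DecidableEq n] {α ε : ℝ} {ρ σ : Matrix n n ℂ}

omit [Fintype n] [DecidableEq n] in
lemma dMax_le_logb {k : ℝ} (hk : 0 < k) (h : loewnerLE ρ (k • σ)) :
    dMax ρ σ ≤ (Real.logb 2 k : ℝ) := by
  refine sInf_le ⟨_, rfl, ?_⟩
  rwa [Real.rpow_logb two_pos (by norm_num) hk, Complex.coe_smul]

lemma petzRenyi_eq_coe_logb (hs : SuppLE ρ σ) (hQ : 0 < petzTrace α ρ σ) :
    petzRenyi α ρ σ = ((α - 1)⁻¹ * Real.logb 2 (petzTrace α ρ σ) : ℝ) := by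
  rw [petzRenyi, if_neg fun h => h.2 hs, ← petzTrace, elog, if_neg hQ.not_ge, EReal.coe_mul]

lemma petzRenyi_eq_top (hα : 1 < α) (hs : ¬ SuppLE ρ σ) : petzRenyi α ρ σ = ⊤ :=
  if_pos ⟨hα, hs⟩

lemma mul_rpow_inv_rpow_one_sub {Q e : ℝ} (hQ : 0 < Q) (he : 0 < e) (hα : α ≠ 1) :
    Q * ((Q / e) ^ (α - 1)⁻¹) ^ (1 - α) = e := by
  have hexp : (α - 1)⁻¹ * (1 - α) = -1 := by
    rw [← neg_sub α 1, mul_neg, inv_mul_cancel₀ (sub_ne_zero.2 hα)]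
  rw [← Real.rpow_mul (by positivity), hexp, Real.rpow_neg_one, inv_div, mul_div_cancel₀ _ hQ.ne']

lemma logb_rpow_inv_div_one_sub_sq {Q : ℝ} (hQ : 0 < Q) (hε : 0 < ε) (hε1 : ε < 1) :
    Real.logb 2 ((Q / ε ^ 2) ^ (α - 1)⁻¹ / (1 - ε ^ 2)) = (α - 1)⁻¹ * Real.logb 2 Q +
      (2 / (α - 1) * Real.logb 2 (1 / ε) + Real.logb 2 (1 / (1 - ε ^ 2))) := by
  have hcomp : 1 - ε ^ 2 ≠ 0 := by nlinarith
  have hratio : 0 < Q / ε ^ 2 := by positivity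
  rw [one_div, one_div, Real.logb_inv, Real.logb_inv, Real.logb_div (by positivity) hcomp,
    Real.logb_rpow_eq_mul_logb_of_pos hratio, Real.logb_div hQ.ne' (by positivity), Real.logb_pow]
  push_cast
  ring

theorem dMaxSmooth_le_petzRenyi_general (hρ : IsState ρ) (hσ : σ.PosSemidef)
    (hε : 0 < ε ∧ ε < 1) (hα : 1 < α) :
    dMaxSmooth ε ρ σ ≤ petzRenyi α ρ σ +
      ((2 / (α - 1) * Real.logb 2 (1 / ε) + Real.logb 2 (1 / (1 - ε ^ 2)) : ℝ) : EReal) := by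
  by_cases hs : SuppLE ρ σ
  swap
  · rw [petzRenyi_eq_top hα hs, EReal.top_add_coe]
    exact le_top
  obtain ⟨hε, hε1⟩ := hε
  have hQ := petzTrace_pos hρ hσ hs hα
  have hε2 : 0 < 1 - ε ^ 2 := by nlinarith
  set r := (petzTrace α ρ σ / ε ^ 2) ^ (α - 1)⁻¹
  have hr0 : 0 < r := by positivity
  obtain ⟨X, hX, hdist, hle⟩ := exists_isState_loewnerLE_smul hρ hσ hs hα hr0
    (mul_rpow_inv_rpow_one_sub hQ (pow_pos hε 2) hα.ne').le (by linarith)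
  rw [Real.sqrt_sq hε.le] at hdist
  calc dMaxSmooth ε ρ σ ≤ dMax X σ := iInf₂_le X ⟨hX, hdist⟩
    _ ≤ (Real.logb 2 (r / (1 - ε ^ 2)) : ℝ) := dMax_le_logb (div_pos hr0 hε2) hle
    _ = _ := by
      rw [logb_rpow_inv_div_one_sub_sq hQ hε hε1, EReal.coe_add, petzRenyi_eq_coe_logb hs hQ]

end Divergences

/-- Smoothed max-relative entropy bounded by the Petz–Rényi divergence. -/
theorem dMaxSmooth_le_petzRenyi {d : ℕ} (ρ σ : Matrix (Fin d) (Fin d) ℂ)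
    (hρ : IsState ρ) (hσ : IsState σ) (ε : ℝ) (hε : 0 < ε ∧ ε < 1) (α : ℝ) (hα : 1 < α) :
    dMaxSmooth ε ρ σ ≤ petzRenyi α ρ σ +
      ((2 / (α - 1) * Real.logb 2 (1 / ε) + Real.logb 2 (1 / (1 - ε ^ 2)) : ℝ) : EReal) :=
  dMaxSmooth_le_petzRenyi_general hρ hσ.1 hε hα

end QCD
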